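/- arXiv:1512.01465 — 2 statements merged into one kernel-verified Lean document; each statement's English description precedes it below -/
import Mathlib

section
/- Maximum individual information rate without feedback (Proposition 2): for every real b with 0 ≤ b ≤ 1 + SNR₂₁ + SNR₂₂ + 2·√(SNR₂₁·SNR₂₂), the supremum of f₁(β₁,β₂) := min{ (1/2)·log₂(1 + β₁·SNR₁₁), (1/2)·log₂(1 + β₁·SNR₁₁ + β₂·SNR₁₂) } over all (β₁,β₂) ∈ [0,1]² satisfying g₀(β₁,β₂) ≥ b equals (1/2)·log₂(1 + (1 − ξ(b)²)·SNR₁₁), and this supremum is attained at β₁ = 1 − ξ(b)², β₂ = 0; in particular it coincides with the maximum individual information rate of the feedback case. -/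
open Real

/-- ξ(b): the minimum channel-input correlation required to achieve the
target energy rate b. -/
noncomputable def xi (SNR₂₁ SNR₂₂ b : ℝ) : ℝ :=
  max 0 (b - (1 + SNR₂₁ + SNR₂₂)) / (2 * Real.sqrt (SNR₂₁ * SNR₂₂))

/-- Transmitter 1's objective `f₁(β₁,β₂)` in the individual-rate
optimization problem without feedback. -/
noncomputable def f₁ (SNR₁₁ SNR₁₂ β₁ β₂ : ℝ) : ℝ :=
  min
    ((1/2) * logb 2 (1 + β₁ * SNR₁₁))
    ((1/2) * logb 2 (1 + β₁ * SNR₁₁ + β₂ * SNR₁₂))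

/-- The energy-rate constraint function `g₀(β₁,β₂)` without feedback. -/
noncomputable def g₀ (SNR₂₁ SNR₂₂ β₁ β₂ : ℝ) : ℝ :=
  1 + SNR₂₁ + SNR₂₂ + 2 * Real.sqrt ((1 - β₁) * SNR₂₁ * ((1 - β₂) * SNR₂₂))

theorem xi_nonneg (s t b : ℝ) : 0 ≤ xi s t b := by
  unfold xi
  positivity

theorem xi_le_iff {s t : ℝ} (hs : 0 < s) (ht : 0 < t) {b c : ℝ} (hc : 0 ≤ c) :
    xi s t b ≤ c ↔ b ≤ 1 + s + t + 2 * (c * √(s * t)) := by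
  have h : 0 < √(s * t) := Real.sqrt_pos.2 (mul_pos hs ht)
  have hc' : 0 ≤ c * √(s * t) := by positivity
  rw [xi, div_le_iff₀ (by positivity), max_le_iff]
  constructor
  · rintro ⟨-, h⟩
    linarith
  · intro h
    constructor <;> linarith

theorem g₀_eq {s t β₁ β₂ : ℝ} (h₁ : β₁ ≤ 1) (h₂ : β₂ ≤ 1) :
    g₀ s t β₁ β₂ = 1 + s + t + 2 * (√((1 - β₁) * (1 - β₂)) * √(s * t)) := by
  have h : 0 ≤ (1 - β₁) * (1 - β₂) := mul_nonneg (by linarith) (by linarith)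
  rw [g₀, ← Real.sqrt_mul h, mul_mul_mul_comm]

/-- The energy constraint is met exactly when the input correlation is at least `ξ(b)`. -/
theorem le_g₀_iff {s t b β₁ β₂ : ℝ} (hs : 0 < s) (ht : 0 < t) (h₁ : β₁ ≤ 1) (h₂ : β₂ ≤ 1) :
    b ≤ g₀ s t β₁ β₂ ↔ xi s t b ^ 2 ≤ (1 - β₁) * (1 - β₂) := by
  have h : 0 ≤ (1 - β₁) * (1 - β₂) := mul_nonneg (by linarith) (by linarith)
  rw [g₀_eq h₁ h₂, ← xi_le_iff hs ht (Real.sqrt_nonneg _),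
    Real.le_sqrt (xi_nonneg s t b) h]

theorem f₁_zero_right (p q β : ℝ) : f₁ p q β 0 = (1/2) * logb 2 (1 + β * p) := by
  simp [f₁]

/-- Proposition 2: the maximum individual information rate of transmitter 1
in the G-MAC(b) is ½·log₂(1 + (1 − ξ(b)²)·SNR₁₁), attained at
β₁ = 1 − ξ(b)², β₂ = 0; in particular it coincides with the maximum
individual information rate of the feedback case. -/
theorem max_individual_rate_no_feedback (SNR₁₁ SNR₁₂ SNR₂₁ SNR₂₂ : ℝ)
    (hS₁₁ : 0 < SNR₁₁) (hS₁₂ : 0 < SNR₁₂) (hS₂₁ : 0 < SNR₂₁) (hS₂₂ : 0 < SNR₂₂)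
    (b : ℝ) (hb₀ : 0 ≤ b)
    (hb₁ : b ≤ 1 + SNR₂₁ + SNR₂₂ + 2 * Real.sqrt (SNR₂₁ * SNR₂₂)) :
    IsGreatest
      {r : ℝ | ∃ β₁ ∈ Set.Icc (0:ℝ) 1, ∃ β₂ ∈ Set.Icc (0:ℝ) 1,
          g₀ SNR₂₁ SNR₂₂ β₁ β₂ ≥ b ∧ r = f₁ SNR₁₁ SNR₁₂ β₁ β₂}
      ((1/2) * logb 2 (1 + (1 - xi SNR₂₁ SNR₂₂ b ^ 2) * SNR₁₁)) ∧
    g₀ SNR₂₁ SNR₂₂ (1 - xi SNR₂₁ SNR₂₂ b ^ 2) 0 ≥ b ∧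
    f₁ SNR₁₁ SNR₁₂ (1 - xi SNR₂₁ SNR₂₂ b ^ 2) 0
      = (1/2) * logb 2 (1 + (1 - xi SNR₂₁ SNR₂₂ b ^ 2) * SNR₁₁) := by
  have hxi : xi SNR₂₁ SNR₂₂ b ≤ 1 :=
    (xi_le_iff hS₂₁ hS₂₂ zero_le_one).2 (by rwa [one_mul])
  have hsq : xi SNR₂₁ SNR₂₂ b ^ 2 ≤ 1 := pow_le_one₀ (xi_nonneg _ _ _) hxi
  have hsq₀ := sq_nonneg (xi SNR₂₁ SNR₂₂ b)
  have hfeas : g₀ SNR₂₁ SNR₂₂ (1 - xi SNR₂₁ SNR₂₂ b ^ 2) 0 ≥ b :=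
    (le_g₀_iff hS₂₁ hS₂₂ (by linarith) zero_le_one).2 (by linarith)
  refine ⟨⟨⟨_, ⟨by linarith, by linarith⟩, 0, ⟨le_rfl, zero_le_one⟩, hfeas,
    (f₁_zero_right _ _ _).symm⟩, ?_⟩, hfeas, f₁_zero_right _ _ _⟩
  rintro r ⟨β₁, ⟨h₁, h₁'⟩, β₂, ⟨h₂, h₂'⟩, hg, rfl⟩
  have hβ : β₁ ≤ 1 - xi SNR₂₁ SNR₂₂ b ^ 2 := by
    have := (le_g₀_iff hS₂₁ hS₂₂ h₁' h₂').1 hg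
    nlinarith [mul_nonneg (sub_nonneg.2 h₁') h₂]
  refine (min_le_left _ _).trans (mul_le_mul_of_nonneg_left ?_ (by norm_num))
  refine Real.logb_le_logb_of_le one_lt_two (by positivity) ?_
  gcongr
end

section
/- Feedback sum-capacity, high-energy regime (Proposition 3, case 2): for every real b with 1 + SNR₂₁ + SNR₂₂ + 2·ρ⋆(1,1)·√(SNR₂₁·SNR₂₂) < b < 1 + SNR₂₁ + SNR₂₂ + 2·√(SNR₂₁·SNR₂₂), the supremum of f(β₁,β₂,ρ) over all (β₁,β₂,ρ) ∈ [0,1]³ satisfying g(β₁,β₂,ρ) ≥ b equals (1/2)·log₂(1 + (1 − ξ(b)²)·SNR₁₁) + (1/2)·log₂(1 + (1 − ξ(b)²)·SNR₁₂), attained at (β₁,β₂,ρ) = (1,1,ξ(b)). -/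
open Real

/-- The feedback sum-rate objective `f(β₁,β₂,ρ)`. -/
noncomputable def f (SNR₁₁ SNR₁₂ β₁ β₂ ρ : ℝ) : ℝ :=
  min
    ((1/2) * logb 2 (1 + β₁ * SNR₁₁ + β₂ * SNR₁₂ +
      2 * ρ * Real.sqrt (β₁ * SNR₁₁ * (β₂ * SNR₁₂))))
    ((1/2) * logb 2 ((1 + β₁ * SNR₁₁ * (1 - ρ ^ 2)) * (1 + β₂ * SNR₁₂ * (1 - ρ ^ 2))))

/-- The feedback energy-rate constraint function `g(β₁,β₂,ρ)`. -/
noncomputable def g (SNR₂₁ SNR₂₂ β₁ β₂ ρ : ℝ) : ℝ :=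
  1 + SNR₂₁ + SNR₂₂ +
    2 * (ρ * Real.sqrt (β₁ * β₂) + Real.sqrt ((1 - β₁) * (1 - β₂))) *
      Real.sqrt (SNR₂₁ * SNR₂₂)

/-- Cauchy–Schwarz for the vectors `(ρ√β₁, √(1-β₁))` and `(√β₂, √(1-β₂))`. -/
lemma sq_correlation_le {β₁ β₂ ρ : ℝ} (h₁ : β₁ ∈ Set.Icc (0 : ℝ) 1)
    (h₂ : β₂ ∈ Set.Icc (0 : ℝ) 1) :
    (ρ * √(β₁ * β₂) + √((1 - β₁) * (1 - β₂))) ^ 2 ≤ 1 - β₁ * (1 - ρ ^ 2) := by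
  obtain ⟨h₁0, h₁1⟩ := h₁
  obtain ⟨h₂0, h₂1⟩ := h₂
  rw [Real.sqrt_mul h₁0, Real.sqrt_mul (sub_nonneg.2 h₁1)]
  have ha := Real.sq_sqrt h₁0
  have hc := Real.sq_sqrt h₂0
  have hb := Real.sq_sqrt (sub_nonneg.2 h₁1)
  have hd := Real.sq_sqrt (sub_nonneg.2 h₂1)
  generalize √β₁ = a at *
  generalize √β₂ = c at *
  generalize √(1 - β₁) = p at *
  generalize √(1 - β₂) = q at *
  have key : 1 - β₁ * (1 - ρ ^ 2) = (ρ ^ 2 * a ^ 2 + p ^ 2) * (c ^ 2 + q ^ 2) := by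
    rw [ha, hb, hc, hd]; ring
  rw [key]
  nlinarith [sq_nonneg (ρ * a * q - p * c)]

/-- The two cut-set terms keep their order to the right of their crossing point. -/
lemma product_le_sum_of_crossing_le {S T ρs x : ℝ} (hS : 0 < S) (hT : 0 < T) (h0 : 0 ≤ ρs)
    (hx : ρs ≤ x) (hx1 : x ≤ 1)
    (heq : 1 + S + T + 2 * ρs * √(S * T) = (1 + S * (1 - ρs ^ 2)) * (1 + T * (1 - ρs ^ 2))) :
    (1 + S * (1 - x ^ 2)) * (1 + T * (1 - x ^ 2)) ≤ 1 + S + T + 2 * x * √(S * T) := by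
  have hsq : ρs ^ 2 ≤ x ^ 2 := by gcongr
  have hx2 : 0 ≤ 1 - x ^ 2 := by nlinarith
  calc (1 + S * (1 - x ^ 2)) * (1 + T * (1 - x ^ 2))
      ≤ (1 + S * (1 - ρs ^ 2)) * (1 + T * (1 - ρs ^ 2)) := by
        have : 0 ≤ 1 - ρs ^ 2 := by linarith
        gcongr
    _ = 1 + S + T + 2 * ρs * √(S * T) := heq.symm
    _ ≤ 1 + S + T + 2 * x * √(S * T) := by gcongr

/-- Proposition 3, case 2: for
1 + SNR₂₁ + SNR₂₂ + 2·ρ⋆(1,1)·√(SNR₂₁·SNR₂₂) < b < 1 + SNR₂₁ + SNR₂₂ + 2·√(SNR₂₁·SNR₂₂),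
the feedback information sum-capacity is
½·log₂(1 + (1 − ξ(b)²)·SNR₁₁) + ½·log₂(1 + (1 − ξ(b)²)·SNR₁₂),
attained at (1,1,ξ(b)). -/
theorem sum_capacity_feedback_high_energy (SNR₁₁ SNR₁₂ SNR₂₁ SNR₂₂ : ℝ)
    (hS₁₁ : 0 < SNR₁₁) (hS₁₂ : 0 < SNR₁₂) (hS₂₁ : 0 < SNR₂₁) (hS₂₂ : 0 < SNR₂₂)
    (ρs : ℝ) (hρs : ρs ∈ Set.Ioo (0:ℝ) 1)
    (hρseq : 1 + SNR₁₁ + SNR₁₂ + 2 * ρs * Real.sqrt (SNR₁₁ * SNR₁₂)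
      = (1 + SNR₁₁ * (1 - ρs ^ 2)) * (1 + SNR₁₂ * (1 - ρs ^ 2)))
    (b : ℝ)
    (hb₀ : 1 + SNR₂₁ + SNR₂₂ + 2 * ρs * Real.sqrt (SNR₂₁ * SNR₂₂) < b)
    (hb₁ : b < 1 + SNR₂₁ + SNR₂₂ + 2 * Real.sqrt (SNR₂₁ * SNR₂₂)) :
    IsGreatest
      {r : ℝ | ∃ β₁ ∈ Set.Icc (0:ℝ) 1, ∃ β₂ ∈ Set.Icc (0:ℝ) 1,
        ∃ ρ ∈ Set.Icc (0:ℝ) 1,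
          g SNR₂₁ SNR₂₂ β₁ β₂ ρ ≥ b ∧ r = f SNR₁₁ SNR₁₂ β₁ β₂ ρ}
      ((1/2) * logb 2 (1 + (1 - xi SNR₂₁ SNR₂₂ b ^ 2) * SNR₁₁) +
        (1/2) * logb 2 (1 + (1 - xi SNR₂₁ SNR₂₂ b ^ 2) * SNR₁₂)) ∧
    g SNR₂₁ SNR₂₂ 1 1 (xi SNR₂₁ SNR₂₂ b) ≥ b ∧
    f SNR₁₁ SNR₁₂ 1 1 (xi SNR₂₁ SNR₂₂ b)
      = (1/2) * logb 2 (1 + (1 - xi SNR₂₁ SNR₂₂ b ^ 2) * SNR₁₁) +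
        (1/2) * logb 2 (1 + (1 - xi SNR₂₁ SNR₂₂ b ^ 2) * SNR₁₂) := by
  have hR : 0 < √(SNR₂₁ * SNR₂₂) := Real.sqrt_pos.2 (mul_pos hS₂₁ hS₂₂)
  obtain ⟨hρ0, hρ1⟩ := hρs
  have hxi : xi SNR₂₁ SNR₂₂ b * (2 * √(SNR₂₁ * SNR₂₂)) = b - (1 + SNR₂₁ + SNR₂₂) := by
    have hpos : 0 ≤ b - (1 + SNR₂₁ + SNR₂₂) := by
      linarith [mul_pos hρ0 hR]
    rw [xi, max_eq_right hpos, div_mul_cancel₀ _ (by positivity)]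
  generalize xi SNR₂₁ SNR₂₂ b = x at *
  have hx0 : ρs < x := by nlinarith
  have hx1 : x < 1 := by nlinarith
  have hx2 : 0 < 1 - x ^ 2 := by nlinarith
  have hlog : (1/2) * logb 2 (1 + (1 - x ^ 2) * SNR₁₁) + (1/2) * logb 2 (1 + (1 - x ^ 2) * SNR₁₂)
      = (1/2) * logb 2 ((1 + SNR₁₁ * (1 - x ^ 2)) * (1 + SNR₁₂ * (1 - x ^ 2))) := by
    rw [Real.logb_mul (by positivity) (by positivity), mul_comm SNR₁₁, mul_comm SNR₁₂]
    ring
  have hg : g SNR₂₁ SNR₂₂ 1 1 x ≥ b := by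
    simp only [g, mul_one, sub_self, mul_zero, Real.sqrt_one, Real.sqrt_zero, add_zero]
    linarith
  have hf : f SNR₁₁ SNR₁₂ 1 1 x = (1/2) * logb 2 (1 + (1 - x ^ 2) * SNR₁₁) +
      (1/2) * logb 2 (1 + (1 - x ^ 2) * SNR₁₂) := by
    have hle := product_le_sum_of_crossing_le hS₁₁ hS₁₂ hρ0.le hx0.le hx1.le hρseq
    rw [hlog, f]
    simp only [one_mul]
    refine min_eq_right (mul_le_mul_of_nonneg_left ?_ (by norm_num))
    exact Real.logb_le_logb_of_le (by norm_num) (by positivity) hle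
  refine ⟨⟨⟨1, by simp, 1, by simp, x, ⟨by linarith, hx1.le⟩, hg, hf.symm⟩, ?_⟩, hg, hf⟩
  rintro r ⟨β₁, h₁, β₂, h₂, ρ, hρ, hge, rfl⟩
  have hcor : x ≤ ρ * √(β₁ * β₂) + √((1 - β₁) * (1 - β₂)) := by
    rw [g] at hge
    nlinarith
  have hsq : x ^ 2 ≤ (ρ * √(β₁ * β₂) + √((1 - β₁) * (1 - β₂))) ^ 2 :=
    pow_le_pow_left₀ (by linarith) hcor 2
  have hsq' : x ^ 2 ≤ (ρ * √(β₂ * β₁) + √((1 - β₂) * (1 - β₁))) ^ 2 := by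
    rwa [mul_comm β₂, mul_comm (1 - β₂)]
  have hb1 : β₁ * (1 - ρ ^ 2) ≤ 1 - x ^ 2 := by
    linarith [sq_correlation_le (ρ := ρ) h₁ h₂]
  have hb2 : β₂ * (1 - ρ ^ 2) ≤ 1 - x ^ 2 := by
    linarith [sq_correlation_le (ρ := ρ) h₂ h₁]
  have hρ2 : 0 ≤ 1 - ρ ^ 2 := by nlinarith [hρ.1, hρ.2]
  have hβ₁ := h₁.1
  have hβ₂ := h₂.1
  rw [hlog, f]
  refine (min_le_right _ _).trans (mul_le_mul_of_nonneg_left ?_ (by norm_num))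
  refine Real.logb_le_logb_of_le (by norm_num) (by positivity) ?_
  have e1 : β₁ * SNR₁₁ * (1 - ρ ^ 2) ≤ SNR₁₁ * (1 - x ^ 2) := by
    linarith [mul_le_mul_of_nonneg_left hb1 hS₁₁.le]
  have e2 : β₂ * SNR₁₂ * (1 - ρ ^ 2) ≤ SNR₁₂ * (1 - x ^ 2) := by
    linarith [mul_le_mul_of_nonneg_left hb2 hS₁₂.le]
  gcongr
end
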